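/- Let F be a field, n ≥ 1, and let f ∈ F[x_1,…,x_n] be a non-constant polynomial. Let t be a new variable, let F̄ be an algebraic closure of F, and let Ω be an algebraic closure of the rational function field F(t). Then f is indecomposable over F̄ if and only if f − t is an irreducible element of the polynomial ring Ω[x_1,…,x_n]. -/

import Mathlib

open MvPolynomial

/-- A non-constant polynomial `f ∈ F[x₁,…,xₙ]` is *decomposable* over `F` if
`f = g(h)` for some univariate `g ∈ F[z]` with `deg g ≥ 2` and some
`h ∈ F[x₁,…,xₙ]`. -/
def MvPolynomial.Decomposable {F : Type*} [CommSemiring F] {n : ℕ}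
    (f : MvPolynomial (Fin n) F) : Prop :=
  ∃ (g : Polynomial F) (h : MvPolynomial (Fin n) F),
    2 ≤ g.natDegree ∧ f = Polynomial.aeval h g

/-!
The ring `K[f]` is integrally closed in `K[x₁,…,xₙ]` when `f` is indecomposable over `K`: by
Gordan's theorem the integral closure of `K[f]` is a polynomial ring `K[h]`, and `f = g(h)` forces
`deg g = 1`. Hence `K(f)` is algebraically closed in `K(x₁,…,xₙ)`.

Identify `K(t)` with `K(f)`. Then `f - t` generates the kernel of the evaluation
`K(t)[x₁,…,xₙ] → K(x₁,…,xₙ)` at the generic point. Since `K(t)` is algebraically closed in the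
target, `f - t` stays a power of an irreducible polynomial over every algebraic extension of `K(t)`,
and since some `∂f/∂xᵢ` does not vanish when `K` is perfect, the exponent is one.

Conversely, if `f = g(h)` then over an algebraically closed field `g(h) - t` splits into `deg g`
factors.
-/

open scoped Polynomial

section Substitution

theorem exists_algHom_natDegree_pos {σ K : Type*} [CommRing K] [IsDomain K]
    {f : MvPolynomial σ K} (hf : 0 < f.totalDegree) :
    ∃ ψ : MvPolynomial σ K →ₐ[K] K[X], 0 < (ψ f).natDegree := by
  by_contra! h_const
  suffices map Polynomial.C f = C (Polynomial.C (constantCoeff f)) by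
    rw [← map_C, (map_injective _ Polynomial.C_injective).eq_iff] at this
    rw [this, totalDegree_C] at hf
    exact hf.false
  refine funext_set (fun _ ↦ Set.range (Polynomial.X * · : K[X] → K[X]))
    (fun _ ↦ Set.infinite_range_of_injective (mul_right_injective₀ Polynomial.X_ne_zero))
    fun u hu ↦ ?_
  choose p hp using fun i ↦ hu i trivial
  obtain rfl : (fun i ↦ Polynomial.X * p i) = u := funext hp
  obtain ⟨c, hc⟩ := Polynomial.natDegree_eq_zero.1
    (Nat.le_zero.1 (h_const (aeval fun i ↦ Polynomial.X * p i)))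
  have hc₀ : c = constantCoeff f := by
    have h_comp : (Polynomial.constantCoeff (R := K)).comp
        (aeval fun i ↦ Polynomial.X * p i : MvPolynomial σ K →ₐ[K] K[X]).toRingHom
        = constantCoeff := by
      ext <;> simp
    simpa [← hc] using congr($h_comp f)
  rw [eval_C, ← hc₀, hc, eval_map, aeval_def, Polynomial.algebraMap_eq]

theorem transcendental_of_natDegree_pos {K : Type*} [CommRing K] [IsDomain K] {p : K[X]}
    (hp : 0 < p.natDegree) : Transcendental K p := by
  have h_lc := Polynomial.leadingCoeff_ne_zero.2 (Polynomial.ne_zero_of_natDegree_gt hp)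
  simpa using (Polynomial.transcendental_X K).aeval p hp.ne' (mem_nonZeroDivisors_of_ne_zero h_lc)

theorem transcendental_of_totalDegree_pos {σ K : Type*} [CommRing K] [IsDomain K]
    {f : MvPolynomial σ K} (hf : 0 < f.totalDegree) : Transcendental K f :=
  let ⟨ψ, hψ⟩ := exists_algHom_natDegree_pos hf
  fun h ↦ transcendental_of_natDegree_pos hψ (h.algHom ψ)

end Substitution

section MinpolyConstantCoeff

variable {R S : Type*} [CommRing R] [CommRing S] [Algebra R S]

theorem dvd_algebraMap_minpoly_coeff_zero (x : S) : x ∣ algebraMap R S ((minpoly R x).coeff 0) := by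
  have h_root : Polynomial.aeval x (minpoly R x) = 0 := minpoly.aeval _ _
  rw [← (minpoly R x).X_mul_divX_add, map_add, map_mul, Polynomial.aeval_X,
    Polynomial.aeval_C] at h_root
  exact (dvd_add_right (dvd_mul_right _ _)).1 (h_root ▸ dvd_zero _)

theorem minpoly_coeff_zero_ne_zero [IsDomain R] [IsIntegrallyClosed R] [IsDomain S]
    [FaithfulSMul R S] {x : S} (hx : IsIntegral R x) (hx₀ : x ≠ 0) :
    (minpoly R x).coeff 0 ≠ 0 := by
  intro h₀
  obtain ⟨q, hq⟩ := Polynomial.X_dvd_iff.2 h₀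
  have hq_monic : q.Monic := Polynomial.Monic.of_mul_monic_left Polynomial.monic_X
    (hq ▸ minpoly.monic hx)
  have hq_root : Polynomial.aeval x q = 0 := by
    have h_root := minpoly.aeval R x
    rw [hq, map_mul, Polynomial.aeval_X] at h_root
    exact (mul_eq_zero.1 h_root).resolve_left hx₀
  have h_le := Polynomial.natDegree_le_of_dvd (minpoly.isIntegrallyClosed_dvd hx hq_root)
    hq_monic.ne_zero
  rw [hq, Polynomial.natDegree_X_mul hq_monic.ne_zero] at h_le
  exact Nat.not_succ_le_self _ h_le

end MinpolyConstantCoeff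

section Gordan

variable {K R : Type*} [Field K] [CommRing R] [Algebra R K[X]]

theorem natDegree_minpoly_X_coeff_zero_pos [IsDomain R] [IsIntegrallyClosed R]
    [FaithfulSMul R K[X]] (hX : IsIntegral R (Polynomial.X : K[X])) :
    0 < (algebraMap R K[X] ((minpoly R (Polynomial.X : K[X])).coeff 0)).natDegree := by
  have h_ne := (map_ne_zero_iff _ (FaithfulSMul.algebraMap_injective R K[X])).2
    (minpoly_coeff_zero_ne_zero hX Polynomial.X_ne_zero)
  simpa [Nat.one_le_iff_ne_zero, Nat.pos_iff_ne_zero] using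
    Polynomial.natDegree_le_of_dvd (dvd_algebraMap_minpoly_coeff_zero _) h_ne

variable [Algebra K R] [IsScalarTower K R K[X]]

theorem isIntegral_X_of_natDegree_pos {r : R} (hr : 0 < (algebraMap R K[X] r).natDegree) :
    IsIntegral R (Polynomial.X : K[X]) := by
  set p := algebraMap R K[X] r with hp
  have hlc : p.leadingCoeff⁻¹ * p.leadingCoeff = 1 :=
    inv_mul_cancel₀ (Polynomial.leadingCoeff_ne_zero.2 (Polynomial.ne_zero_of_natDegree_gt hr))
  have h_monic := Polynomial.monic_C_mul_of_mul_leadingCoeff_eq_one hlc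
  refine ⟨(Polynomial.C p.leadingCoeff⁻¹ * p).map (algebraMap K R)
    - Polynomial.C (algebraMap K R p.leadingCoeff⁻¹ * r), ?_, ?_⟩
  · nontriviality R
    refine (h_monic.map _).sub_of_left (Polynomial.degree_C_le.trans_lt ?_)
    rw [h_monic.degree_map, Polynomial.degree_C_mul (left_ne_zero_of_mul_eq_one hlc)]
    exact Polynomial.natDegree_pos_iff_degree_pos.1 hr
  · rw [← Polynomial.aeval_def, map_sub, Polynomial.aeval_map_algebraMap, Polynomial.aeval_C,
      map_mul (algebraMap R K[X]), ← IsScalarTower.algebraMap_apply, ← hp]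
    simp [Polynomial.algebraMap_eq]

variable [IsDomain R] [IsIntegrallyClosed R] [FaithfulSMul R K[X]]

-- The polynomial `r(Y) - r ∈ R[Y]` vanishes at `Y = X`, so it is divisible by `minpoly R X`.
theorem exists_eq_add_minpoly_X_coeff_zero_mul (hX : IsIntegral R (Polynomial.X : K[X])) (r : R) :
    ∃ s, r = algebraMap K R ((algebraMap R K[X] r).coeff 0)
      + (minpoly R (Polynomial.X : K[X])).coeff 0 * s := by
  have h_root : Polynomial.aeval (Polynomial.X : K[X])
      ((algebraMap R K[X] r).map (algebraMap K R) - Polynomial.C r) = 0 := by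
    simp [Polynomial.aeval_map_algebraMap]
  obtain ⟨q, hq⟩ := minpoly.isIntegrallyClosed_dvd hX h_root
  have h_coeff := congr(Polynomial.coeff $hq 0)
  rw [Polynomial.coeff_sub, Polynomial.coeff_map, Polynomial.coeff_C_zero,
    Polynomial.mul_coeff_zero] at h_coeff
  exact ⟨-q.coeff 0, by rw [mul_neg, ← h_coeff]; ring⟩

theorem adjoin_minpoly_X_coeff_zero (hX : IsIntegral R (Polynomial.X : K[X])) :
    Algebra.adjoin K {(minpoly R (Polynomial.X : K[X])).coeff 0} = ⊤ := by
  set h := (minpoly R (Polynomial.X : K[X])).coeff 0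
  rw [eq_top_iff]
  rintro r -
  induction hd : (algebraMap R K[X] r).natDegree using Nat.strong_induction_on generalizing r with
  | _ d ih =>
  obtain ⟨s, hs⟩ := exists_eq_add_minpoly_X_coeff_zero_mul hX r
  rw [hs]
  refine add_mem (Subalgebra.algebraMap_mem _ _)
    (mul_mem (Algebra.self_mem_adjoin_singleton K h) ?_)
  rcases eq_or_ne s 0 with rfl | hs₀
  · exact zero_mem _
  refine ih _ ?_ rfl
  have h_inj := FaithfulSMul.algebraMap_injective R K[X]
  have h_deg := natDegree_minpoly_X_coeff_zero_pos hX
  have h_sum := congr((algebraMap R K[X] $hs).natDegree)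
  rw [map_add, map_mul, ← IsScalarTower.algebraMap_apply, Polynomial.algebraMap_eq,
    Polynomial.natDegree_C_add, Polynomial.natDegree_mul
      (Polynomial.ne_zero_of_natDegree_gt h_deg)
      ((map_ne_zero_iff _ h_inj).2 hs₀), hd] at h_sum
  omega

theorem exists_adjoin_singleton_eq_top {r : R} (hr : 0 < (algebraMap R K[X] r).natDegree) :
    ∃ h : R, Algebra.adjoin K {h} = ⊤ :=
  ⟨_, adjoin_minpoly_X_coeff_zero (isIntegral_X_of_natDegree_pos hr)⟩

theorem exists_adjoin_eq_integralClosure {A S : Type*} [CommRing A] [CommRing S] [IsDomain S]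
    [IsIntegrallyClosed S] [Algebra K A] [Algebra K S] [Algebra A S] [IsScalarTower K A S]
    (ψ : S →ₐ[K] K[X]) (hψ : Function.Injective (ψ.comp (IsScalarTower.toAlgHom K A S)))
    {a : A} (ha : 0 < (ψ (algebraMap A S a)).natDegree) :
    ∃ h, Algebra.adjoin K {h} = (integralClosure A S).restrictScalars K := by
  set R := integralClosure A S
  have : IsIntegrallyClosed R := .of_isIntegrallyClosed_of_isIntegrallyClosedIn _ S
  let ρ : R →ₐ[K] S := IsScalarTower.toAlgHom K R S
  let _ : Algebra R K[X] := (ψ.comp ρ).toAlgebra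
  let _ : Algebra A K[X] := (ψ.comp (IsScalarTower.toAlgHom K A S)).toAlgebra
  have : IsScalarTower K R K[X] := .of_algebraMap_eq fun c ↦ ((ψ.comp ρ).commutes c).symm
  have : IsScalarTower A R K[X] := .of_algebraMap_eq fun _ ↦ rfl
  have : Nontrivial A := (algebraMap A K[X]).domain_nontrivial
  have : FaithfulSMul R K[X] := (faithfulSMul_iff_algebraMap_injective R K[X]).2
    (Algebra.IsAlgebraic.injective_tower_top (R := A) R hψ)
  obtain ⟨h, hh⟩ := exists_adjoin_singleton_eq_top (K := K) (r := algebraMap A R a) ha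
  refine ⟨h, ?_⟩
  have h_map := congr(($hh).map ρ)
  rw [AlgHom.map_adjoin_singleton, Algebra.map_top] at h_map
  exact h_map.trans (by ext; simp [ρ, R])

end Gordan

section Indecomposable

variable {K : Type*} [Field K]

theorem exists_adjoin_eq_integralClosure_adjoin {σ : Type*} {f : MvPolynomial σ K}
    (hf : 0 < f.totalDegree) :
    ∃ h, Algebra.adjoin K {h} =
      (integralClosure (Algebra.adjoin K {f}) (MvPolynomial σ K)).restrictScalars K := by
  obtain ⟨ψ, hψ⟩ := exists_algHom_natDegree_pos hf
  refine exists_adjoin_eq_integralClosure (a := ⟨f, Algebra.self_mem_adjoin_singleton K f⟩)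
    ψ ?_ hψ
  have h_inj := transcendental_iff_injective.1 (transcendental_of_natDegree_pos hψ)
  rintro ⟨_, ha⟩ ⟨_, hb⟩ hab
  rw [Algebra.adjoin_singleton_eq_range_aeval] at ha hb
  obtain ⟨p, rfl⟩ := ha
  obtain ⟨q, rfl⟩ := hb
  change ψ (Polynomial.aeval f p) = ψ (Polynomial.aeval f q) at hab
  rw [← Polynomial.aeval_algHom_apply, ← Polynomial.aeval_algHom_apply] at hab
  exact Subtype.ext congr(Polynomial.aeval f $(h_inj hab))

theorem isIntegrallyClosedIn_adjoin_of_not_decomposable {n : ℕ} {f : MvPolynomial (Fin n) K}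
    (hf : 0 < f.totalDegree) (hf' : ¬ f.Decomposable) :
    IsIntegrallyClosedIn (Algebra.adjoin K {f}) (MvPolynomial (Fin n) K) := by
  obtain ⟨h, hh⟩ := exists_adjoin_eq_integralClosure_adjoin hf
  have hf_mem : f ∈ Algebra.adjoin K {h} := by
    rw [hh]
    exact isIntegral_algebraMap (R := Algebra.adjoin K {f})
      (x := ⟨f, Algebra.self_mem_adjoin_singleton K f⟩)
  rw [Algebra.adjoin_singleton_eq_range_aeval] at hf_mem
  obtain ⟨g, hg : Polynomial.aeval h g = f⟩ := hf_mem
  have hg_deg : g.natDegree ≤ 1 := Nat.lt_succ_iff.1 (not_le.1 fun hg₂ ↦ hf' ⟨g, h, hg₂, hg.symm⟩)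
  obtain ⟨a, b, rfl⟩ := Polynomial.exists_eq_X_add_C_of_natDegree_le_one hg_deg
  have ha : a ≠ 0 := by
    rintro rfl
    simp [← hg, MvPolynomial.algebraMap_eq] at hf
  have hh_mem : h ∈ Algebra.adjoin K {f} := by
    have hfh : h = a⁻¹ • (f - algebraMap K _ b) := by
      rw [eq_inv_smul_iff₀ ha, ← hg, Algebra.smul_def]
      simp
    rw [hfh]
    exact Subalgebra.smul_mem _ (sub_mem (Algebra.self_mem_adjoin_singleton K f)
      (Subalgebra.algebraMap_mem _ b)) _
  refine isIntegrallyClosedIn_iff.2 ⟨Subtype.val_injective, fun {r} hr ↦ ?_⟩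
  have hr_mem : r ∈ Algebra.adjoin K {h} := hh.symm ▸ hr
  exact ⟨⟨r, Algebra.adjoin_le (by simpa using hh_mem) hr_mem⟩, rfl⟩

end Indecomposable

theorem isIntegrallyClosedIn_of_isFractionRing (R S : Type*) {k N : Type*} [CommRing R] [IsDomain R]
    [CommRing S] [Field k] [Field N] [Algebra R S] [Algebra R k] [IsFractionRing R k]
    [Algebra S N] [IsFractionRing S N] [Algebra R N] [Algebra k N] [IsScalarTower R S N]
    [IsScalarTower R k N] [IsIntegrallyClosed S] [IsIntegrallyClosedIn R S] :
    IsIntegrallyClosedIn k N := by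
  refine isIntegrallyClosedIn_iff.2 ⟨(algebraMap k N).injective, fun {y} hy ↦ ?_⟩
  obtain ⟨r, hr₀, hr⟩ :=
    ((IsFractionRing.isAlgebraic_iff R k N).2 hy.isAlgebraic).exists_integral_multiple
  obtain ⟨s, hs⟩ := IsIntegrallyClosed.isIntegral_iff.1 (hr.tower_top (A := S))
  have hs_int : IsIntegral R s := by
    rwa [← hs, isIntegral_algebraMap_iff (IsFractionRing.injective S N)] at hr
  obtain ⟨c, rfl⟩ := IsIntegrallyClosedIn.isIntegral_iff.1 hs_int
  rw [← IsScalarTower.algebraMap_apply, Algebra.smul_def, IsScalarTower.algebraMap_apply R k N,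
    IsScalarTower.algebraMap_apply R k N] at hs
  have hr₀' : algebraMap k N (algebraMap R k r) ≠ 0 := by simpa using hr₀
  exact ⟨algebraMap R k c / algebraMap R k r, by rw [map_div₀, hs, mul_div_cancel_left₀ _ hr₀']⟩

section LinearDisjoint

variable {k N W : Type*} [Field k] [Field N] [Field W] [Algebra k N] [Algebra k W]
  [Algebra N W] [IsScalarTower k N W] [IsIntegrallyClosedIn k N]

theorem minpoly_eq_map_of_isIntegrallyClosedIn {α : W} (hα : IsIntegral k α) :
    minpoly N α = (minpoly k α).map (algebraMap k N) := by
  have h_monic := minpoly.monic hα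
  have h_dvd : minpoly N α ∣ (minpoly k α).map (algebraMap k N) :=
    minpoly.dvd_map_of_isScalarTower k N α
  have h_lifts : minpoly N α ∈ Polynomial.lifts (algebraMap k N) := by
    have := integralClosure.mem_lifts_of_monic_of_dvd_map N h_monic
      (minpoly.monic hα.tower_top) h_dvd
    rw [Polynomial.lifts_iff_coeff_lifts] at this ⊢
    intro i
    obtain ⟨c, hc⟩ := this i
    exact IsIntegrallyClosedIn.isIntegral_iff.1 (hc ▸ c.2)
  obtain ⟨q, hq⟩ := h_lifts
  have hq_root : Polynomial.aeval α q = 0 := by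
    rw [← Polynomial.aeval_map_algebraMap N, ← Polynomial.coe_mapRingHom, hq, minpoly.aeval]
  rw [← hq]
  refine (Polynomial.eq_of_monic_of_associated ?_ (h_monic.map _)
    (associated_of_dvd_dvd (hq ▸ h_dvd) (Polynomial.map_dvd _ (minpoly.dvd k α hq_root))))
  exact hq ▸ minpoly.monic hα.tower_top

open IntermediateField in
theorem linearDisjoint_adjoin_simple {α : W} (hα : IsIntegral k α) :
    k⟮α⟯.LinearDisjoint N := by
  have h_dim : (adjoin.powerBasis hα).dim = (minpoly N α).natDegree := by
    rw [minpoly_eq_map_of_isIntegrallyClosedIn hα, Polynomial.natDegree_map, adjoin.powerBasis_dim]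
  have h_pow := (linearIndependent_pow (K := N) α).comp _ (Fin.cast_injective h_dim)
  refine .of_basis_left (adjoin.powerBasis hα).basis ?_
  convert! h_pow using 1
  funext i
  simp

open IntermediateField in
theorem linearDisjoint_of_isSeparable (E : IntermediateField k W) [Algebra.IsSeparable k E] :
    E.LinearDisjoint N := by
  have : Algebra.IsIntegral k E.toSubalgebra :=
    (Algebra.IsSeparable.isAlgebraic k E).isIntegral
  refine Subalgebra.LinearDisjoint.of_linearDisjoint_finite_left _ _ fun A hA _ ↦ ?_
  let F : IntermediateField k W := Subalgebra.IsAlgebraic.toIntermediateField (S := A)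
    fun x hx ↦ ((IsIntegral.of_finite k (⟨x, hx⟩ : A)).map A.val).isAlgebraic
  have : FiniteDimensional k F := ‹Module.Finite k A›
  have : Algebra.IsSeparable k F := .of_algHom (E := F) k E (inclusion hA)
  obtain ⟨α, hα⟩ := Field.exists_primitive_element k F
  have h_eq : k⟮(α : W)⟯ = F := by rw [← lift_adjoin_simple, hα, lift_top]
  have := linearDisjoint_adjoin_simple (N := N) ((IsIntegral.of_finite k α).map F.val)
  exact (h_eq ▸ this : F.LinearDisjoint N)

theorem linearIndependent_algebraMap_comp_of_isSeparable {E ι : Type*} [Field E] [Algebra k E]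
    [Algebra E W] [IsScalarTower k E W] [Algebra.IsSeparable k E] {v : ι → E}
    (hv : LinearIndependent k v) : LinearIndependent N (algebraMap E W ∘ v) := by
  let e := AlgEquiv.ofInjectiveField (IsScalarTower.toAlgHom k E W)
  have : Algebra.IsSeparable k (IsScalarTower.toAlgHom k E W).fieldRange :=
    AlgEquiv.Algebra.isSeparable e
  have h_disj := linearDisjoint_of_isSeparable (N := N) (IsScalarTower.toAlgHom k E W).fieldRange
  exact h_disj.linearIndependent_left (hv.map' e.toLinearMap (LinearMap.ker_eq_bot.2 e.injective))

end LinearDisjoint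

section GenericFiber

variable {σ K R : Type*} [CommRing K] [CommRing R] [Algebra K R]

/-- The polynomial `f - t` over a `K`-algebra containing `t`. For `t` transcendental over `K` it is
the equation of the generic fibre of `f`. -/
noncomputable def genericFiber (f : MvPolynomial σ K) (t : R) : MvPolynomial σ R :=
  map (algebraMap K R) f - C t

theorem map_genericFiber {S : Type*} [CommRing S] [Algebra K S] [Algebra R S] [IsScalarTower K R S]
    (f : MvPolynomial σ K) (t : R) :
    map (algebraMap R S) (genericFiber f t) = genericFiber f (algebraMap R S t) := by
  simp [genericFiber, map_map, ← IsScalarTower.algebraMap_eq]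

variable [Algebra R (MvPolynomial σ K)] [IsScalarTower K R (MvPolynomial σ K)] {t : R}

theorem genericFiber_dvd_C_sub_map (ht : Algebra.adjoin K {t} = ⊤) (r : R) :
    genericFiber (algebraMap R (MvPolynomial σ K) t) t ∣
      C r - map (algebraMap K R) (algebraMap R (MvPolynomial σ K) r) := by
  obtain ⟨p, rfl⟩ : ∃ p : K[X], Polynomial.aeval t p = r := by
    have hr : r ∈ Algebra.adjoin K {t} := ht ▸ Algebra.mem_top
    rwa [Algebra.adjoin_singleton_eq_range_aeval] at hr
  have h_C : Polynomial.aeval (C t) p = C (σ := σ) (Polynomial.aeval t p) :=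
    Polynomial.aeval_algebraMap_apply (MvPolynomial σ R) t p
  have h_map : Polynomial.aeval (map (algebraMap K R) (algebraMap R (MvPolynomial σ K) t)) p =
      map (algebraMap K R) (algebraMap R (MvPolynomial σ K) (Polynomial.aeval t p)) := by
    rw [← Polynomial.aeval_algebraMap_apply]
    exact Polynomial.aeval_algHom_apply (mapAlgHom (Algebra.ofId K R)) _ p
  have h_dvd := (p.map (algebraMap K (MvPolynomial σ R))).sub_dvd_eval_sub
    (map (algebraMap K R) (algebraMap R (MvPolynomial σ K) t)) (C t)
  rw [Polynomial.eval_map_algebraMap, Polynomial.eval_map_algebraMap, h_C, h_map] at h_dvd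
  exact (dvd_sub_comm).1 h_dvd

theorem genericFiber_dvd_sub_map_aeval (ht : Algebra.adjoin K {t} = ⊤) (P : MvPolynomial σ R) :
    genericFiber (algebraMap R (MvPolynomial σ K) t) t ∣
      P - map (algebraMap K R) (aeval (X : σ → MvPolynomial σ K) P) := by
  induction P using MvPolynomial.induction_on with
  | C r => rw [aeval_C]; exact genericFiber_dvd_C_sub_map ht r
  | add P Q hP hQ => rw [map_add, map_add, add_sub_add_comm]; exact dvd_add hP hQ
  | mul_X P i hP => rw [map_mul, aeval_X, map_mul, map_X, ← sub_mul]; exact hP.mul_right (X i)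

attribute [local instance] algebraMvPolynomial

variable {k N : Type*} [CommRing k] [CommRing N] [Algebra R k] [IsFractionRing R k]
  [Algebra K k] [IsScalarTower K R k]
  [Algebra R N] [Algebra (MvPolynomial σ K) N] [FaithfulSMul (MvPolynomial σ K) N] [Algebra k N]
  [IsScalarTower R k N] [IsScalarTower R (MvPolynomial σ K) N]

theorem genericFiber_dvd_of_aeval_eq_zero (ht : Algebra.adjoin K {t} = ⊤) {A : MvPolynomial σ k}
    (hA : aeval (algebraMap (MvPolynomial σ K) N ∘ X) A = 0) :
    genericFiber (algebraMap R (MvPolynomial σ K) t) (algebraMap R k t) ∣ A := by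
  obtain ⟨⟨P, _, r, hr, rfl⟩, hP⟩ := IsLocalization.surj ((nonZeroDivisors R).map (C (σ := σ))) A
  have hP' : A * C (algebraMap R k r) = map (algebraMap R k) P := by simpa using hP
  have hP_root : aeval (X : σ → MvPolynomial σ K) P = 0 := by
    refine FaithfulSMul.algebraMap_injective (MvPolynomial σ K) N ?_
    rw [← aeval_algebraMap_apply, ← aeval_map_algebraMap k, ← hP', map_mul, hA, zero_mul, map_zero]
  have h_dvd := genericFiber_dvd_sub_map_aeval ht P
  rw [hP_root, map_zero, sub_zero] at h_dvd
  have h_unit : IsUnit (C (σ := σ) (algebraMap R k r)) :=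
    (IsLocalization.map_units k (⟨r, hr⟩ : nonZeroDivisors R)).map C
  rw [← h_unit.dvd_mul_right, hP']
  simpa only [map_genericFiber] using map_dvd (map (algebraMap R k)) h_dvd

end GenericFiber

section GeometricIrreducibility

open TensorProduct in
theorem exists_sum_C_mul_map {σ k E ι : Type*} [CommRing k] [CommRing E] [Algebra k E]
    (b : Module.Basis ι k E) (A : MvPolynomial σ E) :
    ∃ P : ι →₀ MvPolynomial σ k, P.sum (fun i p ↦ C (b i) * map (algebraMap k E) p) = A := by
  classical
  obtain ⟨P, hP⟩ := TensorProduct.eq_repr_basis_left b ((algebraTensorAlgEquiv k E).symm A)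
  refine ⟨P, ?_⟩
  rw [← AlgEquiv.symm_apply_eq, AlgEquiv.symm_symm, map_finsuppSum] at hP
  simpa [smul_eq_C_mul] using hP

theorem map_dvd_of_aeval_eq_zero_of_isSeparable {σ k N W E : Type*} [Field k] [Field N] [Field W]
    [Field E] [Algebra k N] [Algebra k W] [Algebra N W] [IsScalarTower k N W]
    [IsIntegrallyClosedIn k N] [Algebra k E] [Algebra E W] [IsScalarTower k E W]
    [Algebra.IsSeparable k E] {x : σ → N} {D : MvPolynomial σ k}
    (hD : ∀ P : MvPolynomial σ k, aeval x P = 0 → D ∣ P) {A : MvPolynomial σ E}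
    (hA : aeval (algebraMap N W ∘ x) A = 0) : map (algebraMap k E) D ∣ A := by
  obtain ⟨P, rfl⟩ := exists_sum_C_mul_map (Module.Basis.ofVectorSpace k E) A
  have h_indep := linearIndependent_algebraMap_comp_of_isSeparable (N := N) (W := W)
    (Module.Basis.ofVectorSpace k E).linearIndependent
  rw [linearIndependent_iff'] at h_indep
  have h_sum : ∑ i ∈ P.support, aeval x (P i) •
      (algebraMap E W ∘ Module.Basis.ofVectorSpace k E) i = 0 := by
    rw [← hA, Finsupp.sum, map_sum]
    refine Finset.sum_congr rfl fun i _ ↦ ?_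
    rw [map_mul, aeval_C, aeval_map_algebraMap, aeval_algebraMap_apply, Algebra.smul_def, mul_comm]
    rfl
  exact Finset.dvd_sum fun i hi ↦ (map_dvd _ (hD _ (h_indep _ _ h_sum i hi))).mul_left _

open TensorProduct in
theorem exists_map_eq_pow {σ k E : Type*} [Field k] [Field E] [Algebra k E]
    [IsPurelyInseparable k E] (A : MvPolynomial σ E) :
    ∃ m > 0, ∃ B : MvPolynomial σ k, map (algebraMap k E) B = A ^ m := by
  let e : MvPolynomial σ k ⊗[k] E ≃ₐ[k] MvPolynomial σ E :=
    (Algebra.TensorProduct.comm k _ _).trans ((algebraTensorAlgEquiv k E).restrictScalars k)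
  obtain ⟨m, hm, B, hB⟩ :=
    IsPurelyInseparable.exists_pow_mem_range_tensorProduct (k := k) (e.symm A)
  refine ⟨m, hm, B, ?_⟩
  rw [← map_pow] at hB
  simpa [e] using (e.symm_apply_eq.1 hB.symm).symm

theorem exists_irreducible_dvd_of_map_eq_zero {R S : Type*} [CommRing R]
    [UniqueFactorizationMonoid R] [CommRing S] [IsDomain S] (φ : R →+* S) {r : R} (hr₀ : r ≠ 0)
    (hr : φ r = 0) : ∃ a, Irreducible a ∧ a ∣ r ∧ φ a = 0 := by
  obtain ⟨s, hs, u, hu⟩ := WfDvdMonoid.exists_factors r hr₀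
  have h_prod : (s.map φ).prod = 0 := by
    rw [← map_multiset_prod]
    rw [← hu, map_mul] at hr
    exact (mul_eq_zero.1 hr).resolve_right (u.isUnit.map φ).ne_zero
  obtain ⟨a, ha, ha₀⟩ := Multiset.mem_map.1 (Multiset.prod_eq_zero_iff.1 h_prod)
  exact ⟨a, hs a ha, (Multiset.dvd_prod ha).trans ⟨u, hu.symm⟩, ha₀⟩

theorem exists_dvd_pow_of_aeval_eq_zero {σ k N W Ω : Type*} [Field k] [Field N]
    [Field W] [Field Ω] [Algebra k N] [Algebra k W] [Algebra N W] [IsScalarTower k N W]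
    [IsIntegrallyClosedIn k N] [Algebra k Ω] [Algebra Ω W] [IsScalarTower k Ω W]
    [Algebra.IsAlgebraic k Ω] {x : σ → N} {D : MvPolynomial σ k}
    (hD : ∀ P : MvPolynomial σ k, aeval x P = 0 → D ∣ P) {A : MvPolynomial σ Ω}
    (hA : aeval (algebraMap N W ∘ x) A = 0) : ∃ m, map (algebraMap k Ω) D ∣ A ^ m := by
  let E := separableClosure k Ω
  obtain ⟨m, hm, B, hB⟩ := exists_map_eq_pow (k := E) A
  have hB_root : aeval (algebraMap N W ∘ x) B = 0 := by
    rw [← aeval_map_algebraMap Ω, hB, map_pow, hA, zero_pow hm.ne']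
  have h_dvd := map_dvd (map (algebraMap E Ω)) (map_dvd_of_aeval_eq_zero_of_isSeparable hD hB_root)
  rw [hB, map_map, ← IsScalarTower.algebraMap_eq] at h_dvd
  exact ⟨m, h_dvd⟩

theorem aeval_pderiv_eq_zero_of_sq_dvd {σ R S : Type*} [CommRing R] [CommRing S] [Algebra R S]
    {y : σ → S} {A D : MvPolynomial σ R} (h : A ^ 2 ∣ D) (hA : aeval y A = 0) (i : σ) :
    aeval y (pderiv i D) = 0 := by
  obtain ⟨B, rfl⟩ := h
  simp [sq, hA]

theorem irreducible_map_of_aeval_pderiv_ne_zero {σ k N : Type*} (Ω : Type*) [Field k] [Field N]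
    [Field Ω] [Algebra k N] [IsIntegrallyClosedIn k N] [Algebra k Ω] [Algebra.IsAlgebraic k Ω]
    {x : σ → N} {D : MvPolynomial σ k} (hD : RingHom.ker (aeval (R := k) x) = Ideal.span {D})
    {i : σ} (hi : aeval x (pderiv i D) ≠ 0) : Irreducible (map (algebraMap k Ω) D) := by
  have hD_dvd (P : MvPolynomial σ k) : aeval x P = 0 ↔ D ∣ P := by
    rw [← Ideal.mem_span_singleton, ← hD, RingHom.mem_ker]
  let W := AlgebraicClosure N
  let _ : Algebra Ω W := (IsAlgClosed.lift : Ω →ₐ[k] W).toAlgebra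
  have : IsScalarTower k Ω W := .of_algebraMap_eq' (AlgHom.comp_algebraMap _).symm
  have h_aeval (P : MvPolynomial σ k) : aeval (algebraMap N W ∘ x) (map (algebraMap k Ω) P) =
      algebraMap N W (aeval x P) := by
    rw [aeval_map_algebraMap, aeval_algebraMap_apply]
  have hD_root : aeval (algebraMap N W ∘ x) (map (algebraMap k Ω) D) = 0 := by
    rw [h_aeval, (hD_dvd D).2 dvd_rfl, map_zero]
  have hD_pderiv : aeval (algebraMap N W ∘ x) (pderiv i (map (algebraMap k Ω) D)) ≠ 0 := by
    rwa [pderiv_map, h_aeval, map_ne_zero_iff _ (algebraMap N W).injective]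
  obtain ⟨A, hA_irred, hA_dvd, hA⟩ := exists_irreducible_dvd_of_map_eq_zero
    (aeval (R := Ω) (algebraMap N W ∘ x)).toRingHom (by rintro h; simp [h] at hD_pderiv) hD_root
  obtain ⟨m, hm⟩ := exists_dvd_pow_of_aeval_eq_zero (fun P ↦ (hD_dvd P).1) hA
  obtain ⟨j, -, hj⟩ := (dvd_prime_pow hA_irred.prime m).1 hm
  obtain _ | _ | j := j
  · rw [pow_zero] at hj
    exact absurd (isUnit_of_dvd_unit hA_dvd (associated_one_iff_isUnit.1 hj)) hA_irred.not_isUnit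
  · rw [zero_add, pow_one] at hj
    exact hj.irreducible_iff.2 hA_irred
  · exact absurd (aeval_pderiv_eq_zero_of_sq_dvd
      ((pow_dvd_pow A (Nat.le_add_left 2 j)).trans hj.symm.dvd) hA i) hD_pderiv

end GeometricIrreducibility

section PartialDerivatives

theorem natCast_apply_eq_zero_of_pderiv_eq_zero {σ R : Type*} [CommSemiring R] [NoZeroDivisors R]
    {f : MvPolynomial σ R} {i : σ} (hf : pderiv i f = 0) {m : σ →₀ ℕ} (hm : m ∈ f.support) :
    (m i : R) = 0 := by
  obtain h | h := eq_or_ne (m i) 0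
  · rw [h, Nat.cast_zero]
  · have h_coeff := coeff_pderiv (i := i) f (m - Finsupp.single i 1)
    rw [hf, coeff_zero, Finsupp.sub_add_single_one_cancel h] at h_coeff
    have h_cast : (((m - Finsupp.single i 1 : σ →₀ ℕ) i : ℕ) : R) + 1 = m i := by
      rw [Finsupp.tsub_apply, Finsupp.single_eq_same, ← Nat.cast_succ, Nat.succ_eq_add_one,
        Nat.sub_add_cancel (Nat.one_le_iff_ne_zero.2 h)]
    rw [h_cast, eq_comm, mul_eq_zero] at h_coeff
    exact h_coeff.resolve_left (mem_support_iff.1 hm)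

theorem totalDegree_eq_zero_of_pderiv_eq_zero {σ R : Type*} [CommSemiring R] [NoZeroDivisors R]
    [CharZero R] {f : MvPolynomial σ R} (hf : ∀ i, pderiv i f = 0) : f.totalDegree = 0 :=
  (totalDegree_eq_zero_iff σ f).2 fun _ hm i ↦
    Nat.cast_eq_zero.1 (natCast_apply_eq_zero_of_pderiv_eq_zero (hf i) hm)

theorem exists_pow_eq_of_pderiv_eq_zero {σ R : Type*} [CommRing R] [IsDomain R] (p : ℕ)
    [Fact p.Prime] [CharP R p] [PerfectRing R p] {f : MvPolynomial σ R}
    (hf : ∀ i, pderiv i f = 0) : ∃ g, g ^ p = f := by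
  suffices f ∈ (frobenius (MvPolynomial σ R) p).range from this
  rw [f.as_sum]
  refine sum_mem fun m hm ↦ ?_
  obtain ⟨c, hc⟩ := surjective_frobenius R p (f.coeff m)
  have h_dvd (i : σ) : p ∣ m i :=
    (CharP.cast_eq_zero_iff R p _).1 (natCast_apply_eq_zero_of_pderiv_eq_zero (hf i) hm)
  have h_smul : p • m.mapRange (· / p) (Nat.zero_div p) = m :=
    Finsupp.ext fun i ↦ Nat.mul_div_cancel' (h_dvd i)
  refine ⟨monomial (m.mapRange (· / p) (Nat.zero_div p)) c, ?_⟩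
  rw [frobenius_def, monomial_pow, ← frobenius_def, hc, h_smul]

theorem exists_pderiv_ne_zero_of_not_decomposable {K : Type*} [Field K] [PerfectField K] {n : ℕ}
    {f : MvPolynomial (Fin n) K} (hf : 0 < f.totalDegree) (hf' : ¬ f.Decomposable) :
    ∃ i, pderiv i f ≠ 0 := by
  by_contra! h_pderiv
  obtain ⟨p, _⟩ := CharP.exists K
  obtain hp | rfl := CharP.char_is_prime_or_zero K p
  · have := Fact.mk hp
    have := PerfectField.toPerfectRing (K := K) p
    obtain ⟨g, rfl⟩ := exists_pow_eq_of_pderiv_eq_zero p h_pderiv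
    exact hf' ⟨Polynomial.X ^ p, g, by simpa using hp.two_le, by simp⟩
  · have := CharP.charP_to_charZero K
    exact hf.ne' (totalDegree_eq_zero_of_pderiv_eq_zero h_pderiv)

end PartialDerivatives

section Transfer

variable {σ K Ω : Type*} [Field K] [Field Ω]

theorem isLocalHom_aeval {h : MvPolynomial σ K} (hh : Transcendental K h) :
    IsLocalHom (Polynomial.aeval (R := K) h) where
  map_nonunit p hp := by
    obtain ⟨c, hc, hpc⟩ := isUnit_iff_eq_C_of_isReduced.1 hp
    have h_inj := transcendental_iff_injective.1 hh
    have : p = Polynomial.C c := h_inj (by rw [hpc, Polynomial.aeval_C, algebraMap_eq])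
    exact this ▸ Polynomial.isUnit_C.2 hc

theorem natDegree_eq_one_of_irreducible_aeval [IsAlgClosed K] {h : MvPolynomial σ K}
    (hh : Transcendental K h) {p : K[X]} (hp : Irreducible (Polynomial.aeval h p)) :
    p.natDegree = 1 :=
  have := isLocalHom_aeval hh
  Polynomial.natDegree_eq_of_degree_eq_some (IsAlgClosed.degree_eq_one_of_irreducible K hp.of_map)

theorem totalDegree_map_of_injective {R S : Type*} [CommSemiring R] [CommSemiring S] {φ : R →+* S}
    (hφ : Function.Injective φ) (p : MvPolynomial σ R) :
    (map φ p).totalDegree = p.totalDegree := by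
  rw [totalDegree, support_map_of_injective p hφ, totalDegree]

theorem not_irreducible_genericFiber_of_decomposable [IsAlgClosed Ω] [Algebra K Ω] {n : ℕ}
    {f : MvPolynomial (Fin n) K} (hf : 0 < f.totalDegree) (hf' : f.Decomposable) (t : Ω) :
    ¬ Irreducible (genericFiber f t) := by
  obtain ⟨g, h, hg, rfl⟩ := hf'
  have hh : 0 < h.totalDegree := by
    by_contra! hh
    rw [totalDegree_eq_zero_iff_eq_C.1 (Nat.le_zero.1 hh), ← algebraMap_eq,
      Polynomial.aeval_algebraMap_apply, algebraMap_eq, totalDegree_C] at hf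
    exact hf.false
  have h_fiber : genericFiber (Polynomial.aeval h g) t = Polynomial.aeval (map (algebraMap K Ω) h)
      (g.map (algebraMap K Ω) - Polynomial.C t) := by
    rw [map_sub, Polynomial.aeval_C, Polynomial.aeval_map_algebraMap, algebraMap_eq]
    exact congrArg (· - C t) (Polynomial.aeval_algHom_apply (mapAlgHom (Algebra.ofId K Ω)) h g).symm
  intro h_irred
  rw [h_fiber] at h_irred
  have h_deg := natDegree_eq_one_of_irreducible_aeval (transcendental_of_totalDegree_pos
    (by rwa [totalDegree_map_of_injective (algebraMap K Ω).injective])) h_irred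
  rw [Polynomial.natDegree_sub_C, Polynomial.natDegree_map] at h_deg
  omega

theorem irreducible_genericFiber_of_isIntegrallyClosedIn {R : Type*} [CommRing R] [Algebra K R]
    [Algebra R (MvPolynomial σ K)] [IsScalarTower K R (MvPolynomial σ K)]
    [FaithfulSMul R (MvPolynomial σ K)] [IsIntegrallyClosedIn R (MvPolynomial σ K)] [Algebra K Ω]
    [Algebra R Ω] [IsScalarTower K R Ω] [FaithfulSMul R Ω] [Algebra.IsAlgebraic R Ω] {t : R}
    (ht : Algebra.adjoin K {t} = ⊤) {i : σ}
    (hi : pderiv i (algebraMap R (MvPolynomial σ K) t) ≠ 0) :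
    Irreducible (genericFiber (algebraMap R (MvPolynomial σ K) t) (algebraMap R Ω t)) := by
  have := (FaithfulSMul.algebraMap_injective R Ω).isDomain
  let k := FractionRing R
  let N := FractionRing (MvPolynomial σ K)
  let _ : Algebra k N := FractionRing.liftAlgebra R N
  let _ : Algebra k Ω := FractionRing.liftAlgebra R Ω
  have : IsIntegrallyClosedIn k N := isIntegrallyClosedIn_of_isFractionRing R (MvPolynomial σ K)
  have : Algebra.IsAlgebraic k Ω := (IsFractionRing.comap_isAlgebraic_iff (A := R)).1 inferInstance
  let x : σ → N := algebraMap (MvPolynomial σ K) N ∘ X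
  let D : MvPolynomial σ k := genericFiber (algebraMap R (MvPolynomial σ K) t) (algebraMap R k t)
  have h_eval (p : MvPolynomial σ K) :
      aeval x (map (algebraMap K k) p) = algebraMap (MvPolynomial σ K) N p := by
    rw [aeval_map_algebraMap, aeval_algebraMap_apply, aeval_X_left_apply]
  have hD : RingHom.ker (aeval (R := k) x) = Ideal.span {D} := by
    refine le_antisymm (fun A hA ↦ Ideal.mem_span_singleton.2
      (genericFiber_dvd_of_aeval_eq_zero ht hA)) ?_
    rw [Ideal.span_singleton_le_iff_mem, RingHom.mem_ker]
    simp only [D, genericFiber]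
    rw [map_sub, h_eval, aeval_C, ← IsScalarTower.algebraMap_apply,
      ← IsScalarTower.algebraMap_apply, sub_self]
  have hDi : aeval x (pderiv i D) ≠ 0 := by
    simp only [D, genericFiber]
    rw [map_sub, pderiv_C, sub_zero, pderiv_map, h_eval]
    exact (map_ne_zero_iff _ (IsFractionRing.injective _ _)).2 hi
  have := irreducible_map_of_aeval_pderiv_ne_zero Ω hD hDi
  rwa [map_genericFiber, ← IsScalarTower.algebraMap_apply] at this

theorem irreducible_genericFiber_of_not_decomposable [PerfectField K] [Algebra K Ω] {n : ℕ}
    {f : MvPolynomial (Fin n) K} (hf : 0 < f.totalDegree) (hf' : ¬ f.Decomposable) {t : Ω}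
    (ht : Transcendental K t) [Algebra.IsAlgebraic (Algebra.adjoin K {t}) Ω] :
    Irreducible (genericFiber f t) := by
  obtain ⟨i, hi⟩ := exists_pderiv_ne_zero_of_not_decomposable hf hf'
  have := isIntegrallyClosedIn_adjoin_of_not_decomposable hf hf'
  let f₀ : Algebra.adjoin K {f} := ⟨f, Algebra.self_mem_adjoin_singleton K f⟩
  let φ := Polynomial.algEquivOfTranscendental K f (transcendental_of_totalDegree_pos hf)
  let ψ := Polynomial.algEquivOfTranscendental K t ht
  let e : Algebra.adjoin K {f} ≃ₐ[K] Algebra.adjoin K {t} := φ.symm.trans ψ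
  let _ : Algebra (Algebra.adjoin K {f}) Ω := ((Subalgebra.val _).comp e.toAlgHom).toAlgebra
  have : IsScalarTower K (Algebra.adjoin K {f}) Ω :=
    .of_algHom ((Subalgebra.val _).comp e.toAlgHom)
  have : FaithfulSMul (Algebra.adjoin K {f}) Ω := (faithfulSMul_iff_algebraMap_injective _ _).2
    (Subtype.val_injective.comp e.injective)
  have : Algebra.IsAlgebraic (Algebra.adjoin K {f}) Ω :=
    .of_ringHom_of_comp_eq e.toRingHom (RingHom.id Ω) e.surjective Function.injective_id rfl
  have h_top : Algebra.adjoin K {f₀} = ⊤ :=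
    (Algebra.adjoin_singleton_eq_range_aeval K f₀).trans ((AlgHom.range_eq_top _).2 φ.surjective)
  have h_image : algebraMap (Algebra.adjoin K {f}) Ω f₀ = t := by
    have hφ : φ.symm f₀ = Polynomial.X :=
      φ.symm_apply_eq.2 (Polynomial.algEquivOfTranscendental_apply_X ..).symm
    change (ψ (φ.symm f₀) : Ω) = t
    rw [hφ, Polynomial.algEquivOfTranscendental_apply_X]
  have := irreducible_genericFiber_of_isIntegrallyClosedIn h_top hi (Ω := Ω)
  rwa [h_image] at this

theorem not_decomposable_iff_irreducible_genericFiber [PerfectField K] [IsAlgClosed Ω]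
    [Algebra K Ω] {n : ℕ} {f : MvPolynomial (Fin n) K} (hf : 0 < f.totalDegree) {t : Ω}
    (ht : Transcendental K t) [Algebra.IsAlgebraic (Algebra.adjoin K {t}) Ω] :
    ¬ f.Decomposable ↔ Irreducible (genericFiber f t) :=
  ⟨fun hf' ↦ irreducible_genericFiber_of_not_decomposable hf hf' ht, fun h_irred hf' ↦
    not_irreducible_genericFiber_of_decomposable hf hf' t h_irred⟩

end Transfer

section RationalFunctionField

theorem isAlgebraic_adjoin_of_isAlgebraic_ratFunc (F : Type*) {K Ω : Type*} [Field F] [Field K]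
    [Field Ω] [Algebra F K] [Algebra F Ω] [Algebra K Ω] [IsScalarTower F K Ω]
    [Algebra (RatFunc F) Ω] [IsScalarTower F (RatFunc F) Ω] [Algebra.IsAlgebraic (RatFunc F) Ω] :
    Algebra.IsAlgebraic (Algebra.adjoin K {algebraMap (RatFunc F) Ω RatFunc.X}) Ω := by
  set t := algebraMap (RatFunc F) Ω RatFunc.X
  let _ : Algebra F[X] Ω :=
    ((algebraMap (RatFunc F) Ω).comp (algebraMap F[X] (RatFunc F))).toAlgebra
  have : IsScalarTower F[X] (RatFunc F) Ω := .of_algebraMap_eq' rfl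
  have : Algebra.IsAlgebraic F[X] Ω :=
    (IsFractionRing.comap_isAlgebraic_iff (K := RatFunc F)).2 inferInstance
  let φ : F[X] →ₐ[F] Algebra.adjoin K {t} :=
    Polynomial.aeval ⟨t, Algebra.self_mem_adjoin_singleton K t⟩
  have hφ : (algebraMap (Algebra.adjoin K {t}) Ω).comp φ = algebraMap F[X] Ω := by
    refine Polynomial.ringHom_ext (fun a ↦ ?_) ?_
    · change algebraMap _ Ω (φ (Polynomial.C a)) = algebraMap (RatFunc F) Ω _
      rw [Polynomial.aeval_C, RatFunc.algebraMap_C, ← RatFunc.algebraMap_eq_C,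
        ← IsScalarTower.algebraMap_apply, ← IsScalarTower.algebraMap_apply]
    · change algebraMap _ Ω (φ Polynomial.X) = algebraMap (RatFunc F) Ω _
      rw [Polynomial.aeval_X, RatFunc.algebraMap_X]
      rfl
  have hφ_inj : Function.Injective φ := by
    refine .of_comp (f := algebraMap (Algebra.adjoin K {t}) Ω) ?_
    change Function.Injective ((algebraMap (Algebra.adjoin K {t}) Ω).comp (φ : F[X] →+* _))
    rw [hφ]
    exact (algebraMap (RatFunc F) Ω).injective.comp (IsFractionRing.injective F[X] (RatFunc F))
  exact .ringHom_of_comp_eq (φ : F[X] →+* _) (RingHom.id Ω) hφ_inj Function.surjective_id hφ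

theorem indecomposable_iff_sub_t_irreducible_general {F K Ω : Type*} [Field F] [Field K]
    [Algebra F K] [Algebra.IsAlgebraic F K] [PerfectField K] [Field Ω] [Algebra F Ω]
    [Algebra (RatFunc F) Ω] [IsScalarTower F (RatFunc F) Ω] [IsAlgClosure (RatFunc F) Ω] {n : ℕ}
    {f : MvPolynomial (Fin n) F} (hf : 0 < f.totalDegree) :
    ¬ (map (algebraMap F K) f).Decomposable ↔
      Irreducible (genericFiber f (algebraMap (RatFunc F) Ω RatFunc.X)) := by
  have := IsAlgClosure.isAlgClosed (RatFunc F) (K := Ω)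
  have := IsAlgClosure.isAlgebraic (R := RatFunc F) (K := Ω)
  let _ : Algebra K Ω := (IsAlgClosed.lift (R := F) : K →ₐ[F] Ω).toAlgebra
  have : IsScalarTower F K Ω := .of_algHom (IsAlgClosed.lift (R := F) : K →ₐ[F] Ω)
  have := isAlgebraic_adjoin_of_isAlgebraic_ratFunc F (K := K) (Ω := Ω)
  have ht : Transcendental K (algebraMap (RatFunc F) Ω RatFunc.X) :=
    ((transcendental_algebraMap_iff (algebraMap (RatFunc F) Ω).injective).2
      RatFunc.transcendental_X).extendScalars K
  rw [not_decomposable_iff_irreducible_genericFiber (by rwa [totalDegree_map_of_injective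
    (algebraMap F K).injective]) ht, genericFiber, map_map, ← IsScalarTower.algebraMap_eq,
    genericFiber]

end RationalFunctionField

/-- **Indecomposability is equivalent to irreducibility of `f − t`.**
Let `f ∈ F[x₁,…,xₙ]` be a non-constant polynomial over a field `F`, let `F̄` be an
algebraic closure of `F`, and let `Ω` be an algebraic closure of the rational function
field `F(t)`. Then `f` is indecomposable over `F̄` if and only if `f − t` is irreducible
in `Ω[x₁,…,xₙ]`. -/
theorem indecomposable_iff_sub_t_irreducible
    (F : Type) [Field F] (n : ℕ) (hn : 1 ≤ n)
    (f : MvPolynomial (Fin n) F) (hf : 0 < f.totalDegree) :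
    (¬ (MvPolynomial.map (algebraMap F (AlgebraicClosure F)) f).Decomposable)
      ↔ Irreducible
          (MvPolynomial.map (algebraMap F (AlgebraicClosure (RatFunc F))) f
            - MvPolynomial.C
                (algebraMap (RatFunc F) (AlgebraicClosure (RatFunc F)) RatFunc.X)) :=
  indecomposable_iff_sub_t_irreducible_general hf
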